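/- (Lemma 3.1) Let n ≥ 1 and let F = (F₁, F₂, F₃) : ℝ^{2n+1} → ℝ^{2n+1} be a real-analytic map, with F₁ = (F₁₁, …, F₁ₙ), F₂ scalar-valued, F₃ = (F₃₁, …, F₃ₙ), such that the transform 𝒯(Φ) = F ∘ Φ maps GX into GX, satisfies 𝒯(𝒯(Φ)) = Φ for all Φ ∈ GX, fixes every Φ ∈ GY, and moves every Φ ∈ GX ∖ GY. Then for every i ∈ {1, …, n} there exist real constants pᵢ, pᵢ', qᵢ, qᵢ' such that, writing the coordinates of ℝ^{2n+1} as (X₁, …, Xₙ, Y, Z₁, …, Zₙ), one has F₁ᵢ(X, Y, Z) = pᵢ Xᵢ + pᵢ' Zᵢ and F₃ᵢ(X, Y, Z) = qᵢ Xᵢ + qᵢ' Zᵢ identically on ℝ^{2n+1}. -/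

import Mathlib

open scoped BigOperators

/-- Triples `(θ, a, b)` encoding maps `ℝⁿ → ℝ^{2n+1}`. -/
abbrev TripleMap (n : ℕ) :=
  ((Fin n → ℝ) → Fin n → ℝ) × ((Fin n → ℝ) → ℝ) × ((Fin n → ℝ) → Fin n → ℝ)

/-- All three components are `C^∞`. -/
def SmoothTriple (n : ℕ) (Φ : TripleMap n) : Prop :=
  ContDiff ℝ (⊤ : ℕ∞) Φ.1 ∧ ContDiff ℝ (⊤ : ℕ∞) Φ.2.1 ∧ ContDiff ℝ (⊤ : ℕ∞) Φ.2.2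

/-- The creative condition (*): `da = ∑ᵢ bᵢ dθᵢ`. -/
def Creative (n : ℕ) (Φ : TripleMap n) : Prop :=
  ∀ x v : Fin n → ℝ,
    fderiv ℝ Φ.2.1 x v = ∑ i, Φ.2.2 x i * fderiv ℝ (fun y => Φ.1 y i) x v

/-- `RegPts f` is the set of regular points of `f : ℝⁿ → ℝⁿ`, i.e. points where
the differential is invertible. -/
def RegPts (n : ℕ) (f : (Fin n → ℝ) → Fin n → ℝ) : Set (Fin n → ℝ) :=
  {x | Function.Bijective (fderiv ℝ f x)}

/-- `X`: smooth triples satisfying the creative condition. -/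
def Xset (n : ℕ) : Set (TripleMap n) := {Φ | SmoothTriple n Φ ∧ Creative n Φ}

/-- `GX`: elements of `X` such that `Reg θ` and `Reg b` are dense. -/
def GXset (n : ℕ) : Set (TripleMap n) :=
  {Φ | SmoothTriple n Φ ∧ Creative n Φ ∧ Dense (RegPts n Φ.1) ∧ Dense (RegPts n Φ.2.2)}

/-- `Y`: triples of the form `(θ, ½∑θᵢ², θ)` with `θ` smooth. -/
def Yset (n : ℕ) : Set (TripleMap n) :=
  {Φ | ∃ θ : (Fin n → ℝ) → Fin n → ℝ, ContDiff ℝ (⊤ : ℕ∞) θ ∧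
    Φ = (θ, fun x => (1 / 2) * ∑ i, θ x i ^ 2, θ)}

/-- `GY`: triples of the form `(θ, ½∑θᵢ², θ)` with `θ` smooth and `Reg θ` dense. -/
def GYset (n : ℕ) : Set (TripleMap n) :=
  {Φ | ∃ θ : (Fin n → ℝ) → Fin n → ℝ, ContDiff ℝ (⊤ : ℕ∞) θ ∧ Dense (RegPts n θ) ∧
    Φ = (θ, fun x => (1 / 2) * ∑ i, θ x i ^ 2, θ)}

/-- The Legendre involution `L(θ, a, b) = (b, ∑ᵢ bᵢθᵢ − a, θ)`. -/
def Legendre (n : ℕ) (Φ : TripleMap n) : TripleMap n :=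
  (Φ.2.2, fun x => (∑ i, Φ.2.2 x i * Φ.1 x i) - Φ.2.1 x, Φ.1)

/-- Packing a triple `(θ, a, b)` into a single map `ℝⁿ → ℝ^{2n+1}`
(realized as `ℝⁿ × ℝ × ℝⁿ`). -/
def packTriple (n : ℕ) (Φ : TripleMap n) : (Fin n → ℝ) → (Fin n → ℝ) × ℝ × (Fin n → ℝ) :=
  fun x => (Φ.1 x, Φ.2.1 x, Φ.2.2 x)

/-- Unpacking a map `ℝⁿ → ℝ^{2n+1}` into a triple `(θ, a, b)`. -/
def unpackTriple (n : ℕ) (Ψ : (Fin n → ℝ) → (Fin n → ℝ) × ℝ × (Fin n → ℝ)) : TripleMap n :=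
  (fun x => (Ψ x).1, fun x => (Ψ x).2.1, fun x => (Ψ x).2.2)

open Matrix

/-- The space `ℝ^{2n+1}` of points `(X, Y, Z)`. -/
abbrev JetSpace (n : ℕ) := (Fin n → ℝ) × ℝ × (Fin n → ℝ)

theorem fderiv_dotProduct_apply {E : Type*} [NormedAddCommGroup E] [NormedSpace ℝ E] {n : ℕ}
    {f g : E → Fin n → ℝ} {x : E} (hf : DifferentiableAt ℝ f x) (hg : DifferentiableAt ℝ g x)
    (v : E) :
    fderiv ℝ (fun y => f y ⬝ᵥ g y) x v
      = fderiv ℝ f x v ⬝ᵥ g x + f x ⬝ᵥ fderiv ℝ g x v := by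
  have hf' := differentiableAt_pi.1 hf
  have hg' := differentiableAt_pi.1 hg
  simp only [dotProduct]
  rw [fderiv_fun_sum (fun i _ => (hf' i).fun_mul (hg' i))]
  simp only [_root_.sum_apply, ← Finset.sum_add_distrib]
  refine Finset.sum_congr rfl fun i _ => ?_
  rw [fderiv_fun_mul (hf' i) (hg' i), fderiv_apply hf, fderiv_apply hg]
  simp
  ring

theorem creative_iff {n : ℕ} {Φ : TripleMap n} (h : SmoothTriple n Φ) :
    Creative n Φ ↔ ∀ x v, fderiv ℝ Φ.2.1 x v = Φ.2.2 x ⬝ᵥ fderiv ℝ Φ.1 x v := by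
  have hd : Differentiable ℝ Φ.1 := h.1.differentiable (by simp)
  simp only [Creative, dotProduct]
  refine forall₂_congr fun x v => ?_
  simp [fderiv_apply (hd x)]

/-- The tangent spaces of a creative map are isotropic. -/
theorem Creative.isotropic {n : ℕ} {Φ : TripleMap n} (h : SmoothTriple n Φ)
    (hc : Creative n Φ) (x u v : Fin n → ℝ) :
    fderiv ℝ Φ.2.2 x u ⬝ᵥ fderiv ℝ Φ.1 x v = fderiv ℝ Φ.2.2 x v ⬝ᵥ fderiv ℝ Φ.1 x u := by
  rw [creative_iff h] at hc
  have hsymm {G : Type} [NormedAddCommGroup G] [NormedSpace ℝ G] {f : (Fin n → ℝ) → G}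
      (hf : ContDiff ℝ (⊤ : ℕ∞) f) :
      fderiv ℝ (fderiv ℝ f) x u v = fderiv ℝ (fderiv ℝ f) x v u :=
    (hf.contDiffAt.isSymmSndFDerivAt (by
      rw [minSmoothness_of_isRCLikeNormedField]
      exact WithTop.coe_le_coe.2 (le_top : (2 : ℕ∞) ≤ ⊤))).eq u v
  have hdd {G : Type} [NormedAddCommGroup G] [NormedSpace ℝ G] {f : (Fin n → ℝ) → G}
      (hf : ContDiff ℝ (⊤ : ℕ∞) f) : DifferentiableAt ℝ (fderiv ℝ f) x :=
    (hf.fderiv_right (m := 1) (WithTop.coe_le_coe.2 (le_top : (1 + 1 : ℕ∞) ≤ ⊤))).differentiable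
      (by simp) x
  have key (u v : Fin n → ℝ) : fderiv ℝ (fderiv ℝ Φ.2.1) x u v
      = fderiv ℝ Φ.2.2 x u ⬝ᵥ fderiv ℝ Φ.1 x v
        + Φ.2.2 x ⬝ᵥ fderiv ℝ (fderiv ℝ Φ.1) x u v := by
    have h1 : fderiv ℝ (fun y => fderiv ℝ Φ.2.1 y v) x u
        = fderiv ℝ (fun y => Φ.2.2 y ⬝ᵥ fderiv ℝ Φ.1 y v) x u := by
      simp only [hc]
    rw [fderiv_dotProduct_apply (h.2.2.differentiable (by simp) x)
      ((hdd h.1).clm_apply (differentiableAt_const v)),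
      fderiv_clm_apply (hdd h.1) (differentiableAt_const v),
      fderiv_clm_apply (hdd h.2.1) (differentiableAt_const v)] at h1
    simpa using h1
  have := key u v
  rw [hsymm h.2.1, key v u, hsymm h.1 (f := Φ.1)] at this
  linarith

/-- Regular points of an analytic map with at least one regular point are dense. -/
theorem dense_regPts {n : ℕ} {f : (Fin n → ℝ) → Fin n → ℝ} (hf : AnalyticOnNhd ℝ f Set.univ)
    {x₀ : Fin n → ℝ} (h₀ : x₀ ∈ RegPts n f) : Dense (RegPts n f) := by
  have hmem (x : Fin n → ℝ) : x ∈ RegPts n f ↔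
      (LinearMap.toMatrix' (fderiv ℝ f x : (Fin n → ℝ) →ₗ[ℝ] Fin n → ℝ)).det ≠ 0 := by
    rw [LinearMap.det_toMatrix', ← isUnit_iff_ne_zero, ← LinearMap.isUnit_iff_isUnit_det,
      Module.End.isUnit_iff]
    rfl
  have han : AnalyticOnNhd ℝ (fun x =>
      (LinearMap.toMatrix' (fderiv ℝ f x : (Fin n → ℝ) →ₗ[ℝ] Fin n → ℝ)).det) Set.univ := by
    simp only [Matrix.det_apply, LinearMap.toMatrix'_apply]
    refine Finset.analyticOnNhd_fun_sum _ fun σ _ => ?_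
    refine AnalyticOnNhd.const_smul ?_
    refine Finset.analyticOnNhd_fun_prod _ fun i _ => ?_
    intro x hx
    let e : ((Fin n → ℝ) →L[ℝ] (Fin n → ℝ)) →L[ℝ] ℝ :=
      (ContinuousLinearMap.proj (R := ℝ) (φ := fun _ : Fin n => ℝ) (σ i)).comp
        (ContinuousLinearMap.apply ℝ (Fin n → ℝ) (Pi.single i 1))
    exact (e.analyticAt _).comp (hf.fderiv x hx)
  rw [dense_iff_inter_open]
  intro U hU ⟨y, hy⟩
  by_contra hne
  rw [Set.not_nonempty_iff_eq_empty] at hne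
  refine (hmem x₀).1 h₀ ?_
  refine han.eqOn_zero_of_preconnected_of_eventuallyEq_zero isPreconnected_univ
    (Set.mem_univ y) ?_ (Set.mem_univ x₀)
  filter_upwards [hU.mem_nhds hy] with z hz
  by_contra hz'
  exact Set.notMem_empty z (hne ▸ ⟨hz, (hmem z).2 hz'⟩)

/-- Existence of an invertible symmetric map with prescribed value at a nonzero vector. -/
theorem exists_symm_bijective {n : ℕ} {u u' : Fin n → ℝ} (hu : u ≠ 0) (hu' : u' ≠ 0) :
    ∃ S : (Fin n → ℝ) →L[ℝ] (Fin n → ℝ), (∀ x y, S x ⬝ᵥ y = S y ⬝ᵥ x) ∧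
      Function.Bijective S ∧ S u = u' := by
  have hpos {z : Fin n → ℝ} (hz : z ≠ 0) : 0 < z ⬝ᵥ z := by
    refine lt_of_le_of_ne ?_ (fun h => hz (dotProduct_self_eq_zero.1 h.symm))
    exact Finset.sum_nonneg fun i _ => mul_self_nonneg _
  set c : ℝ := Real.sqrt (u ⬝ᵥ u / (u' ⬝ᵥ u')) with hc
  have hc0 : 0 < c := Real.sqrt_pos.2 (div_pos (hpos hu) (hpos hu'))
  have hcc : c * c * (u' ⬝ᵥ u') = u ⬝ᵥ u := by
    rw [hc, Real.mul_self_sqrt (div_pos (hpos hu) (hpos hu')).le,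
      div_mul_cancel₀ _ (hpos hu').ne']
  set d : Fin n → ℝ := u - c • u' with hd
  let R : (Fin n → ℝ) →ₗ[ℝ] (Fin n → ℝ) :=
    { toFun := fun x => c⁻¹ • (x - (2 * (d ⬝ᵥ x) / (d ⬝ᵥ d)) • d)
      map_add' := fun x y => by
        simp only [dotProduct_add, mul_add, add_div, add_smul]; module
      map_smul' := fun r x => by
        simp only [dotProduct_smul, smul_eq_mul, RingHom.id_apply]
        rw [show 2 * (r * (d ⬝ᵥ x)) / (d ⬝ᵥ d) = r * (2 * (d ⬝ᵥ x) / (d ⬝ᵥ d)) by ring]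
        module }
  have hR (x : Fin n → ℝ) : R x = c⁻¹ • (x - (2 * (d ⬝ᵥ x) / (d ⬝ᵥ d)) • d) := rfl
  refine ⟨R.toContinuousLinearMap, fun x y => ?_, ?_, ?_⟩
  · simp only [LinearMap.coe_toContinuousLinearMap', hR, smul_dotProduct, sub_dotProduct,
      smul_eq_mul, dotProduct_comm x y]
    ring
  · simp only [LinearMap.coe_toContinuousLinearMap']
    have hinj : Function.Injective R := by
      rw [← LinearMap.ker_eq_bot, LinearMap.ker_eq_bot']
      intro x hx
      rw [hR, smul_eq_zero_iff_right (inv_ne_zero hc0.ne')] at hx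
      by_cases hd0 : d = 0
      · simpa [hd0] using hx
      have hdd := (hpos hd0).ne'
      have h1 := congrArg (fun z => d ⬝ᵥ z) hx
      simp only [dotProduct_sub, dotProduct_smul, smul_eq_mul, dotProduct_zero,
        div_mul_cancel₀ _ hdd] at h1
      have h2 : d ⬝ᵥ x = 0 := by linarith
      simpa [h2] using hx
    exact ⟨hinj, LinearMap.injective_iff_surjective.1 hinj⟩
  · simp only [LinearMap.coe_toContinuousLinearMap', hR]
    by_cases hd0 : d = 0
    · have : u = c • u' := sub_eq_zero.1 hd0
      rw [hd0]
      simp only [dotProduct_zero, smul_zero, sub_zero]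
      rw [this, inv_smul_smul₀ hc0.ne']
    have hdd := (hpos hd0).ne'
    have h1 : 2 * (d ⬝ᵥ u) = d ⬝ᵥ d := by
      simp only [hd, sub_dotProduct, dotProduct_sub, smul_dotProduct, dotProduct_smul,
        smul_eq_mul, dotProduct_comm u' u]
      linear_combination -hcc
    rw [h1, div_self hdd, one_smul, hd, sub_sub_cancel, inv_smul_smul₀ hc0.ne']

/-- The quadratic triple through `p` with tangent directions `(P, Q)`. -/
noncomputable def quadTriple {n : ℕ} (p : JetSpace n) (P Q : (Fin n → ℝ) →L[ℝ] (Fin n → ℝ)) :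
    TripleMap n :=
  (fun x => p.1 + P x, fun x => p.2.1 + p.2.2 ⬝ᵥ P x + 1 / 2 * (Q x ⬝ᵥ P x),
    fun x => p.2.2 + Q x)

section quadTriple

variable {n : ℕ} (p : JetSpace n) (P Q : (Fin n → ℝ) →L[ℝ] (Fin n → ℝ))

theorem contDiff_packTriple_quadTriple {k : WithTop ℕ∞} :
    ContDiff ℝ k (packTriple n (quadTriple p P Q)) := by
  unfold packTriple
  simp only [quadTriple, dotProduct]
  fun_prop

theorem smoothTriple_quadTriple : SmoothTriple n (quadTriple p P Q) :=
  have h := contDiff_packTriple_quadTriple p P Q (k := (⊤ : ℕ∞))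
  ⟨h.fst, h.snd.fst, h.snd.snd⟩

@[simp]
theorem packTriple_quadTriple_zero : packTriple n (quadTriple p P Q) 0 = p := by
  simp [packTriple, quadTriple]

theorem fderiv_quadTriple_fst (x : Fin n → ℝ) : fderiv ℝ (quadTriple p P Q).1 x = P := by
  simp [quadTriple]

theorem fderiv_quadTriple_snd_snd (x : Fin n → ℝ) :
    fderiv ℝ (quadTriple p P Q).2.2 x = Q := by
  simp [quadTriple]

theorem fderiv_quadTriple_snd_fst (x v : Fin n → ℝ) : fderiv ℝ (quadTriple p P Q).2.1 x v =
    p.2.2 ⬝ᵥ P v + 1 / 2 * (Q v ⬝ᵥ P x + Q x ⬝ᵥ P v) := by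
  have hP : DifferentiableAt ℝ (fun y => P y) x := P.differentiableAt
  have hQ : DifferentiableAt ℝ (fun y => Q y) x := Q.differentiableAt
  have h1 : DifferentiableAt ℝ (fun y => p.2.2 ⬝ᵥ P y) x := by
    simp only [dotProduct]; fun_prop
  have h2 : DifferentiableAt ℝ (fun y => Q y ⬝ᵥ P y) x := by
    simp only [dotProduct]; fun_prop
  simp only [quadTriple]
  rw [fderiv_fun_add (h1.const_add _) (h2.const_mul _), fderiv_const_add,
    fderiv_const_mul h2]
  simp only [_root_.add_apply, _root_.smul_apply]
  rw [fderiv_dotProduct_apply hQ hP, fderiv_dotProduct_apply (differentiableAt_const _) hP]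
  simp

theorem fderiv_packTriple_apply {Φ : TripleMap n} (h : SmoothTriple n Φ) (x v : Fin n → ℝ) :
    fderiv ℝ (packTriple n Φ) x v
      = (fderiv ℝ Φ.1 x v, fderiv ℝ Φ.2.1 x v, fderiv ℝ Φ.2.2 x v) := by
  have h1 : DifferentiableAt ℝ Φ.1 x := h.1.differentiable (by simp) x
  have h2 : DifferentiableAt ℝ Φ.2.1 x := h.2.1.differentiable (by simp) x
  have h3 : DifferentiableAt ℝ Φ.2.2 x := h.2.2.differentiable (by simp) x
  have := h1.hasFDerivAt.prodMk (h2.hasFDerivAt.prodMk h3.hasFDerivAt)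
  have h4 : HasFDerivAt (packTriple n Φ) _ x := this
  rw [h4.fderiv]
  rfl

theorem fderiv_packTriple_quadTriple_zero (v : Fin n → ℝ) :
    fderiv ℝ (packTriple n (quadTriple p P Q)) 0 v = (P v, p.2.2 ⬝ᵥ P v, Q v) := by
  rw [fderiv_packTriple_apply (smoothTriple_quadTriple p P Q), fderiv_quadTriple_fst,
    fderiv_quadTriple_snd_snd, fderiv_quadTriple_snd_fst]
  simp

variable {P Q}

theorem creative_quadTriple (h : ∀ u v, Q u ⬝ᵥ P v = Q v ⬝ᵥ P u) :
    Creative n (quadTriple p P Q) := by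
  rw [creative_iff (smoothTriple_quadTriple p P Q)]
  intro x v
  rw [fderiv_quadTriple_fst, fderiv_quadTriple_snd_fst, h v x]
  simp only [quadTriple, add_dotProduct]
  ring

theorem quadTriple_mem_GXset (h : ∀ u v, Q u ⬝ᵥ P v = Q v ⬝ᵥ P u)
    (hP : Function.Bijective P) (hQ : Function.Bijective Q) : quadTriple p P Q ∈ GXset n := by
  refine ⟨smoothTriple_quadTriple p P Q, creative_quadTriple p h, ?_, ?_⟩
  · simp only [RegPts, fderiv_quadTriple_fst, hP, Set.ofPred_true, dense_univ]
  · simp only [RegPts, fderiv_quadTriple_snd_snd, hQ, Set.ofPred_true, dense_univ]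

theorem bijective_of_quadTriple_mem_GXset (h : quadTriple p P Q ∈ GXset n) :
    Function.Bijective P ∧ Function.Bijective Q := by
  obtain ⟨x, hx⟩ := h.2.2.1.nonempty
  obtain ⟨y, hy⟩ := h.2.2.2.nonempty
  simp only [RegPts, fderiv_quadTriple_fst, fderiv_quadTriple_snd_snd] at hx hy
  exact ⟨hx, hy⟩

end quadTriple

theorem apply_add_eq_of_fderiv_eq_zero {E G : Type*} [NormedAddCommGroup E] [NormedSpace ℝ E]
    [NormedAddCommGroup G] [NormedSpace ℝ G] {f : E → G} (hf : Differentiable ℝ f) {p d : E}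
    (h : ∀ t : ℝ, fderiv ℝ f (p + t • d) d = 0) : f (p + d) = f p := by
  have hd (t : ℝ) : HasDerivAt (fun t : ℝ => f (p + t • d)) 0 t := by
    have h1 : HasDerivAt (fun t : ℝ => p + t • d) d t := by
      simpa using ((hasDerivAt_id t).smul_const d).const_add p
    have := (hf (p + t • d)).hasFDerivAt.comp_hasDerivAt t h1
    rwa [h] at this
  have := is_const_of_deriv_eq_zero (fun t => (hd t).differentiableAt) (fun t => (hd t).deriv) 1 0
  simpa using this

theorem eq_snd_snd_of_contact {n : ℕ} {f : JetSpace n → Fin n → ℝ} (hf : Differentiable ℝ f)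
    (h0 : ∀ (p : JetSpace n) v, fderiv ℝ f p (v, p.2.2 ⬝ᵥ v, 0) = 0)
    (hinj : ∀ (p : JetSpace n) w, fderiv ℝ f p (0, 0, w) = 0 → w = 0)
    (hY : ∀ x : Fin n → ℝ, f (x, 1 / 2 * (x ⬝ᵥ x), x) = x) (p : JetSpace n) : f p = p.2.2 := by
  have hY0 (p : JetSpace n) : fderiv ℝ f p (0, 1, 0) = 0 := by
    by_contra hκ
    let G : (Fin n → ℝ) →ₗ[ℝ] (Fin n → ℝ) := (fderiv ℝ f p : JetSpace n →ₗ[ℝ] _) ∘ₗ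
      LinearMap.inr ℝ _ _ ∘ₗ LinearMap.inr ℝ _ _
    have hG (w : Fin n → ℝ) : G w = fderiv ℝ f p (0, 0, w) := rfl
    have hGi : Function.Injective G :=
      LinearMap.ker_eq_bot.1 (LinearMap.ker_eq_bot'.2 fun w hw => hinj p w hw)
    obtain ⟨w, hw⟩ := LinearMap.injective_iff_surjective.1 hGi (fderiv ℝ f p (0, 1, 0))
    have hw0 : w ≠ 0 := by
      rintro rfl
      exact hκ (by rw [← hw, map_zero])
    have hww : w ⬝ᵥ w ≠ 0 := fun h => hw0 (dotProduct_self_eq_zero.1 h)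
    set ξ : Fin n → ℝ := (w ⬝ᵥ w)⁻¹ • w with hξ
    let τ : JetSpace n →L[ℝ] JetSpace n := LinearMap.toContinuousLinearMap
      { toFun := fun q => (q.1, q.2.1 + q.2.2 ⬝ᵥ ξ, q.2.2)
        map_add' := fun a b => by ext <;> simp [add_dotProduct]; ring
        map_smul' := fun a b => by ext <;> simp [smul_dotProduct]; ring }
    have hτ (q : JetSpace n) : τ q = (q.1, q.2.1 + q.2.2 ⬝ᵥ ξ, q.2.2) := rfl
    have hinv (q : JetSpace n) : f (τ q + (ξ, 0, 0)) = f q := by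
      have := apply_add_eq_of_fderiv_eq_zero hf (p := q) (d := (ξ, q.2.2 ⬝ᵥ ξ, 0)) (fun t => by
        have h1 := h0 (q + t • (ξ, q.2.2 ⬝ᵥ ξ, 0)) ξ
        rwa [show (q + t • ((ξ, q.2.2 ⬝ᵥ ξ, 0) : JetSpace n)).2.2 = q.2.2 by simp] at h1)
      rw [← this, hτ]
      congr 1
      ext <;> simp
    have hder (d : JetSpace n) : fderiv ℝ f (τ p + (ξ, 0, 0)) (τ d) = fderiv ℝ f p d := by
      have h1 : HasFDerivAt (fun q => τ q + (ξ, 0, 0)) τ p := τ.hasFDerivAt.add_const _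
      have h2 := (hf (τ p + (ξ, 0, 0))).hasFDerivAt.comp p h1
      have h3 : (f ∘ fun q => τ q + (ξ, 0, 0)) = f := funext hinv
      rw [h3] at h2
      rw [h2.fderiv]
      rfl
    refine hw0 (hinj (τ p + (ξ, 0, 0)) w ?_)
    have h1 := hder (0, 0, w)
    have h2 := hder (0, 1, 0)
    have h3 : ((0, 0, w) : JetSpace n) = τ (0, 0, w) - τ (0, 1, 0) := by
      simp [hτ, hξ, dotProduct_smul, inv_mul_cancel₀ hww]
    rw [h3, map_sub, h1, h2, ← hG, hw, sub_self]
  have hX0 (p : JetSpace n) (v : Fin n → ℝ) (s : ℝ) : fderiv ℝ f p (v, s, 0) = 0 := by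
    have h3 : ((v, s, 0) : JetSpace n) = (v, p.2.2 ⬝ᵥ v, 0) + (s - p.2.2 ⬝ᵥ v) • (0, 1, 0) := by
      simp
    rw [h3, map_add, map_smul, h0, hY0, smul_zero, add_zero]
  conv_rhs => rw [← hY p.2.2]
  rw [← apply_add_eq_of_fderiv_eq_zero hf (p := p)
    (d := (p.2.2 - p.1, 1 / 2 * (p.2.2 ⬝ᵥ p.2.2) - p.2.1, 0)) (fun t => hX0 _ _ _)]
  congr 1
  ext <;> simp

theorem eq_fst_of_contact {n : ℕ} {f : JetSpace n → Fin n → ℝ} (hf : Differentiable ℝ f)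
    (h0 : ∀ (p : JetSpace n) w, fderiv ℝ f p (0, 0, w) = 0)
    (hinj : ∀ (p : JetSpace n) v, fderiv ℝ f p (v, p.2.2 ⬝ᵥ v, 0) = 0 → v = 0)
    (hY : ∀ x : Fin n → ℝ, f (x, 1 / 2 * (x ⬝ᵥ x), x) = x) (p : JetSpace n) : f p = p.1 := by
  have hY0 (p : JetSpace n) : fderiv ℝ f p (0, 1, 0) = 0 := by
    by_contra hκ
    let G : (Fin n → ℝ) →ₗ[ℝ] (Fin n → ℝ) :=
      { toFun := fun v => fderiv ℝ f p (v, p.2.2 ⬝ᵥ v, 0)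
        map_add' := fun a b => by rw [← map_add]; simp [dotProduct_add]
        map_smul' := fun a b => by rw [← map_smul]; simp [dotProduct_smul] }
    have hGi : Function.Injective G :=
      LinearMap.ker_eq_bot.1 (LinearMap.ker_eq_bot'.2 fun w hw => hinj p w hw)
    obtain ⟨w, hw⟩ := LinearMap.injective_iff_surjective.1 hGi (fderiv ℝ f p (0, 1, 0))
    have hw0 : w ≠ 0 := by
      rintro rfl
      exact hκ (by rw [← hw, map_zero])
    have hww : w ⬝ᵥ w ≠ 0 := fun h => hw0 (dotProduct_self_eq_zero.1 h)
    set ζ : Fin n → ℝ := -((w ⬝ᵥ w)⁻¹ • w) with hζ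
    have hinv (q : JetSpace n) : f (q + (0, 0, ζ)) = f q :=
      apply_add_eq_of_fderiv_eq_zero hf (fun t => h0 _ _)
    have hder : fderiv ℝ f (p + (0, 0, ζ)) = fderiv ℝ f p := by
      rw [← fderiv_comp_add_right]
      simp only [hinv]
    refine hw0 (hinj (p + (0, 0, ζ)) w ?_)
    have h3 : ((w, (p + (0, 0, ζ)).2.2 ⬝ᵥ w, 0) : JetSpace n)
        = (w, p.2.2 ⬝ᵥ w, 0) - (0, 1, 0) := by
      simp [hζ, add_dotProduct, smul_dotProduct, inv_mul_cancel₀ hww]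
      ring
    rw [h3, hder, map_sub, ← hw]
    exact sub_self _
  have hZ0 (p : JetSpace n) (w : Fin n → ℝ) (s : ℝ) : fderiv ℝ f p (0, s, w) = 0 := by
    have h3 : ((0, s, w) : JetSpace n) = (0, 0, w) + s • (0, 1, 0) := by simp
    rw [h3, map_add, map_smul, h0, hY0, smul_zero, add_zero]
  conv_rhs => rw [← hY p.1]
  rw [← apply_add_eq_of_fderiv_eq_zero hf (p := p)
    (d := (0, 1 / 2 * (p.1 ⬝ᵥ p.1) - p.2.1, p.1 - p.2.2)) (fun t => hZ0 _ _ _)]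
  congr 1
  ext <;> simp

section Transform

variable {n : ℕ} {F : JetSpace n → JetSpace n}

theorem involutive_of_GXset
    (hinv : ∀ Φ ∈ GXset n, F ∘ F ∘ packTriple n Φ = packTriple n Φ) : Function.Involutive F := by
  intro p
  have h := hinv _ (quadTriple_mem_GXset p (P := .id ℝ _) (Q := .id ℝ _)
    (fun u v => dotProduct_comm _ _) Function.bijective_id Function.bijective_id)
  simpa using congrFun h 0

theorem Function.Involutive.fderiv_fderiv {E : Type*} [NormedAddCommGroup E] [NormedSpace ℝ E]
    {f : E → E} (h : Function.Involutive f) (hf : Differentiable ℝ f) (p d : E) :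
    fderiv ℝ f (f p) (fderiv ℝ f p d) = d := by
  have h1 := (hf (f p)).hasFDerivAt.comp p (hf p).hasFDerivAt
  rw [h.comp_self] at h1
  simpa using congrArg (fun L => L d) (h1.unique (hasFDerivAt_id p))

/-- The differential of `F` maps contact planes to contact planes. -/
def IsContact (F : JetSpace n → JetSpace n) : Prop :=
  ∀ (p : JetSpace n) (v w : Fin n → ℝ), (fderiv ℝ F p (v, p.2.2 ⬝ᵥ v, w)).2.1
    = (F p).2.2 ⬝ᵥ (fderiv ℝ F p (v, p.2.2 ⬝ᵥ v, w)).1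

theorem smoothTriple_transform (hF : ContDiff ℝ (⊤ : ℕ∞) F) {Φ : TripleMap n}
    (h : SmoothTriple n Φ) : SmoothTriple n (unpackTriple n (F ∘ packTriple n Φ)) :=
  have h1 : ContDiff ℝ (⊤ : ℕ∞) (F ∘ packTriple n Φ) :=
    hF.comp (h.1.prodMk (h.2.1.prodMk h.2.2))
  ⟨h1.fst, h1.snd.fst, h1.snd.snd⟩

theorem fderiv_transform (hF : Differentiable ℝ F) {Φ : TripleMap n} (h : SmoothTriple n Φ)
    (x v : Fin n → ℝ) : fderiv ℝ (F ∘ packTriple n Φ) x v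
      = fderiv ℝ F (packTriple n Φ x) (fderiv ℝ (packTriple n Φ) x v) := by
  have h1 : ContDiff ℝ (⊤ : ℕ∞) (packTriple n Φ) := h.1.prodMk (h.2.1.prodMk h.2.2)
  rw [fderiv_comp x (hF _) (h1.differentiable (by simp) x)]
  rfl

theorem IsContact.creative_transform (hc : IsContact F) (hF : ContDiff ℝ (⊤ : ℕ∞) F)
    {Φ : TripleMap n} (h : SmoothTriple n Φ) (hΦ : Creative n Φ) :
    Creative n (unpackTriple n (F ∘ packTriple n Φ)) := by
  have hs := smoothTriple_transform hF h
  rw [creative_iff hs]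
  rw [creative_iff h] at hΦ
  intro x v
  have h1 := fderiv_packTriple_apply hs x v
  have h2 : fderiv ℝ (F ∘ packTriple n Φ) x v = _ := h1
  rw [fderiv_transform (hF.differentiable (by simp)) h, fderiv_packTriple_apply h, hΦ] at h2
  have h3 := hc (packTriple n Φ x) (fderiv ℝ Φ.1 x v) (fderiv ℝ Φ.2.2 x v)
  change (fderiv ℝ F (packTriple n Φ x) (fderiv ℝ Φ.1 x v, Φ.2.2 x ⬝ᵥ fderiv ℝ Φ.1 x v,
    fderiv ℝ Φ.2.2 x v)).2.1 = _ ⬝ᵥ (fderiv ℝ F (packTriple n Φ x) (fderiv ℝ Φ.1 x v,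
    Φ.2.2 x ⬝ᵥ fderiv ℝ Φ.1 x v, fderiv ℝ Φ.2.2 x v)).1 at h3
  rw [h2] at h3
  exact h3

theorem isContact_of_GXset (hF : ContDiff ℝ (⊤ : ℕ∞) F)
    (hmap : ∀ Φ ∈ GXset n, unpackTriple n (F ∘ packTriple n Φ) ∈ GXset n) : IsContact F := by
  intro p
  have hd := hF.differentiable (by simp)
  have key (c : ℝ) (hc : c ≠ 0) (v : Fin n → ℝ) :
      (fderiv ℝ F p (v, p.2.2 ⬝ᵥ v, c • v)).2.1
        = (F p).2.2 ⬝ᵥ (fderiv ℝ F p (v, p.2.2 ⬝ᵥ v, c • v)).1 := by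
    set Φ := quadTriple p (.id ℝ _) (c • .id ℝ _)
    have hΦ : Φ ∈ GXset n := by
      refine quadTriple_mem_GXset p (fun u v => ?_) Function.bijective_id ?_
      · simp [dotProduct_comm u v]
      · exact (LinearEquiv.smulOfNeZero ℝ (Fin n → ℝ) c hc).bijective
    have hT := hmap Φ hΦ
    have h1 : fderiv ℝ (F ∘ packTriple n Φ) 0 v = _ := fderiv_packTriple_apply hT.1 0 v
    rw [fderiv_transform hd hΦ.1, fderiv_packTriple_quadTriple_zero,
      packTriple_quadTriple_zero] at h1
    have h2 := (creative_iff hT.1).1 hT.2.1 0 v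
    have h3 : (unpackTriple n (F ∘ packTriple n Φ)).2.2 0 = (F p).2.2 := by
      simp [unpackTriple, Φ]
    rw [h3] at h2
    simp only [ContinuousLinearMap.id_apply, _root_.smul_apply] at h1
    rw [h1]
    exact h2
  let ℓ : JetSpace n →ₗ[ℝ] ℝ :=
    { toFun := fun d => (fderiv ℝ F p d).2.1 - (F p).2.2 ⬝ᵥ (fderiv ℝ F p d).1
      map_add' := fun a b => by simp [dotProduct_add]; ring
      map_smul' := fun a b => by simp [dotProduct_smul]; ring }
  have hℓ (c : ℝ) (hc : c ≠ 0) (v : Fin n → ℝ) : ℓ (v, p.2.2 ⬝ᵥ v, c • v) = 0 :=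
    sub_eq_zero.2 (key c hc v)
  have hw (w : Fin n → ℝ) : ℓ (0, 0, w) = 0 := by
    have h3 : ((0, 0, w) : JetSpace n)
        = (w, p.2.2 ⬝ᵥ w, (2 : ℝ) • w) - (w, p.2.2 ⬝ᵥ w, (1 : ℝ) • w) := by
      simp [two_smul]
    rw [h3, map_sub, hℓ 2 two_ne_zero, hℓ 1 one_ne_zero, sub_zero]
  intro v w
  have h3 : ((v, p.2.2 ⬝ᵥ v, w) : JetSpace n)
      = (v, p.2.2 ⬝ᵥ v, (1 : ℝ) • v) + (0, 0, w - v) := by simp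
  refine sub_eq_zero.1 (?_ : ℓ (v, p.2.2 ⬝ᵥ v, w) = 0)
  rw [h3, map_add, hℓ 1 one_ne_zero, hw, add_zero]

/-- A transform preserving `GX` maps vertical and horizontal contact vectors to vectors that are
vertical or horizontal. -/
theorem fderiv_fst_eq_zero_or_snd_snd_eq_zero (hF : AnalyticOnNhd ℝ F Set.univ)
    (hmap : ∀ Φ ∈ GXset n, unpackTriple n (F ∘ packTriple n Φ) ∈ GXset n)
    (hinv : ∀ Φ ∈ GXset n, F ∘ F ∘ packTriple n Φ = packTriple n Φ) (p : JetSpace n)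
    {v w : Fin n → ℝ} (hvw : v = 0 ∨ w = 0) :
    (fderiv ℝ F p (v, p.2.2 ⬝ᵥ v, w)).1 = 0 ∨ (fderiv ℝ F p (v, p.2.2 ⬝ᵥ v, w)).2.2 = 0 := by
  have hs : ContDiff ℝ (⊤ : ℕ∞) F := hF.contDiff
  have hd : Differentiable ℝ F := hs.differentiable (by simp)
  have hc := isContact_of_GXset hs hmap
  have hF2 := involutive_of_GXset hinv
  by_contra! hcon
  obtain ⟨hu, hu'⟩ := hcon
  set d : JetSpace n := (v, p.2.2 ⬝ᵥ v, w) with hdef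
  obtain ⟨S, hS, hSb, hSu⟩ := exists_symm_bijective hu hu'
  set u := (fderiv ℝ F p d).1
  set Φ := quadTriple (F p) (.id ℝ _) S
  have hΦ : Φ ∈ GXset n := quadTriple_mem_GXset _ hS Function.bijective_id hSb
  have hT := hmap Φ hΦ
  set P := fderiv ℝ (unpackTriple n (F ∘ packTriple n Φ)).1 0
  set Q := fderiv ℝ (unpackTriple n (F ∘ packTriple n Φ)).2.2 0
  have hsymm : ∀ a b, Q a ⬝ᵥ P b = Q b ⬝ᵥ P a := hT.2.1.isotropic hT.1 0
  have hPQ (x : Fin n → ℝ) :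
      fderiv ℝ F (F p) (x, (F p).2.2 ⬝ᵥ x, S x) = (P x, p.2.2 ⬝ᵥ P x, Q x) := by
    have h1 : fderiv ℝ (F ∘ packTriple n Φ) 0 x = _ := fderiv_packTriple_apply hT.1 0 x
    rw [fderiv_transform hd hΦ.1, fderiv_packTriple_quadTriple_zero,
      packTriple_quadTriple_zero, (creative_iff hT.1).1 hT.2.1] at h1
    have h3 : (unpackTriple n (F ∘ packTriple n Φ)).2.2 0 = p.2.2 := by
      simp [unpackTriple, Φ, hF2 p]
    rwa [h3] at h1
  have hu_eq : fderiv ℝ F p d = (u, (F p).2.2 ⬝ᵥ u, S u) := by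
    rw [hSu, ← hc p v w]
  have hPu : (P u, p.2.2 ⬝ᵥ P u, Q u) = d := by
    rw [← hPQ, ← hu_eq, hF2.fderiv_fderiv hd]
  set Ψ := quadTriple p P Q
  have hΨs : SmoothTriple n Ψ := smoothTriple_quadTriple p P Q
  have hTs := smoothTriple_transform hs hΨs
  have hder (x : Fin n → ℝ) : fderiv ℝ (F ∘ packTriple n Ψ) 0 x
      = (x, (F p).2.2 ⬝ᵥ x, S x) := by
    rw [fderiv_transform hd hΨs, fderiv_packTriple_quadTriple_zero, packTriple_quadTriple_zero,
      ← hPQ]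
    have := hF2.fderiv_fderiv hd (F p) (x, (F p).2.2 ⬝ᵥ x, S x)
    rwa [hF2 p] at this
  have hder' (x : Fin n → ℝ) :=
    (show fderiv ℝ (F ∘ packTriple n Ψ) 0 x = _ from fderiv_packTriple_apply hTs 0 x).symm.trans
      (hder x)
  have han : AnalyticOnNhd ℝ (F ∘ packTriple n Ψ) Set.univ :=
    hF.comp (contDiff_packTriple_quadTriple p P Q).analyticOnNhd (Set.mapsTo_univ _ _)
  have hTΨ : unpackTriple n (F ∘ packTriple n Ψ) ∈ GXset n := by
    refine ⟨hTs, hc.creative_transform hs hΨs (creative_quadTriple p hsymm), ?_, ?_⟩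
    · refine dense_regPts (x₀ := 0)
        (fun x hx => analyticAt_fst.comp (han x hx)) ?_
      have : fderiv ℝ (unpackTriple n (F ∘ packTriple n Ψ)).1 0 = .id ℝ _ :=
        ContinuousLinearMap.ext fun x => congrArg Prod.fst (hder' x)
      change Function.Bijective (fderiv ℝ (unpackTriple n (F ∘ packTriple n Ψ)).1 0)
      rw [this]
      exact Function.bijective_id
    · refine dense_regPts (x₀ := 0)
        (fun x hx => analyticAt_snd.comp (analyticAt_snd.comp (han x hx))) ?_
      have : fderiv ℝ (unpackTriple n (F ∘ packTriple n Ψ)).2.2 0 = S :=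
        ContinuousLinearMap.ext fun x => congrArg (fun q => q.2.2) (hder' x)
      change Function.Bijective (fderiv ℝ (unpackTriple n (F ∘ packTriple n Ψ)).2.2 0)
      rwa [this]
  have hΨ : Ψ ∈ GXset n := by
    have h1 := hmap _ hTΨ
    have h2 : F ∘ packTriple n (unpackTriple n (F ∘ packTriple n Ψ)) = packTriple n Ψ :=
      funext fun x => hF2 _
    rw [h2] at h1
    exact h1
  obtain ⟨hPb, hQb⟩ := bijective_of_quadTriple_mem_GXset p hΨ
  rcases hvw with rfl | rfl
  · exact hu (hPb.1 ((congrArg Prod.fst hPu).trans (map_zero P).symm))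
  · exact hu (hQb.1 ((congrArg (fun q => q.2.2) hPu).trans (map_zero Q).symm))

theorem LinearMap.eq_zero_or_eq_zero_of_forall {E G : Type*} [AddCommGroup E] [Module ℝ E]
    [AddCommGroup G] [Module ℝ G] (f g : E →ₗ[ℝ] G) (h : ∀ x, f x = 0 ∨ g x = 0) :
    f = 0 ∨ g = 0 := by
  by_contra! hcon
  obtain ⟨x, hx⟩ := DFunLike.ne_iff.1 hcon.1
  obtain ⟨y, hy⟩ := DFunLike.ne_iff.1 hcon.2
  change f x ≠ 0 at hx
  change g y ≠ 0 at hy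
  have hgx := (h x).resolve_left hx
  have hfy := (h y).resolve_right hy
  rcases h (x + y) with h | h
  · exact hx (by simpa [hfy] using h)
  · exact hy (by simpa [hgx] using h)

/-- An injective block map whose block columns each vanish pointwise in one of the two entries is
block diagonal or block antidiagonal. -/
theorem LinearMap.blockDiagonal_or_antidiagonal {E : Type*} [AddCommGroup E] [Module ℝ E]
    [FiniteDimensional ℝ E] [Nontrivial E] (A B C D : E →ₗ[ℝ] E)
    (hinj : ∀ v w, A v + B w = 0 → C v + D w = 0 → v = 0 ∧ w = 0)
    (hBD : ∀ w, B w = 0 ∨ D w = 0) (hAC : ∀ v, A v = 0 ∨ C v = 0) :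
    (B = 0 ∧ C = 0) ∨ (A = 0 ∧ D = 0) := by
  obtain ⟨e, he⟩ := exists_ne (0 : E)
  rcases LinearMap.eq_zero_or_eq_zero_of_forall B D hBD with rfl | rfl <;>
    rcases LinearMap.eq_zero_or_eq_zero_of_forall A C hAC with rfl | rfl
  · have hD : Function.Injective D := LinearMap.ker_eq_bot.1 (LinearMap.ker_eq_bot'.2
      fun w hw => (hinj 0 w (by simp) (by simp [hw])).2)
    obtain ⟨w, hw⟩ := LinearMap.injective_iff_surjective.1 hD (-C e)
    exact absurd (hinj e w (by simp) (by simp [hw])).1 he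
  · exact .inl ⟨rfl, rfl⟩
  · exact .inr ⟨rfl, rfl⟩
  · have hB : Function.Injective B := LinearMap.ker_eq_bot.1 (LinearMap.ker_eq_bot'.2
      fun w hw => (hinj 0 w (by simp [hw]) (by simp)).2)
    obtain ⟨w, hw⟩ := LinearMap.injective_iff_surjective.1 hB (-A e)
    exact absurd (hinj e w (by simp [hw]) (by simp)).1 he

/-- The horizontal lift of `v` to the contact plane at `p`. -/
def horizontalLift (p : JetSpace n) : (Fin n → ℝ) →ₗ[ℝ] JetSpace n where
  toFun v := (v, p.2.2 ⬝ᵥ v, 0)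
  map_add' a b := by simp [dotProduct_add]
  map_smul' a b := by simp [dotProduct_smul]

theorem IsContact.eq_zero_of_fderiv (hc : IsContact F) (hF2 : Function.Involutive F)
    (hd : Differentiable ℝ F) (p : JetSpace n) {v w : Fin n → ℝ}
    (h1 : (fderiv ℝ F p (v, p.2.2 ⬝ᵥ v, w)).1 = 0)
    (h2 : (fderiv ℝ F p (v, p.2.2 ⬝ᵥ v, w)).2.2 = 0) : v = 0 ∧ w = 0 := by
  have h3 := hc p v w
  rw [h1, dotProduct_zero] at h3
  have h4 : fderiv ℝ F p (v, p.2.2 ⬝ᵥ v, w) = 0 := Prod.ext h1 (Prod.ext h3 h2)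
  have h5 := hF2.fderiv_fderiv hd p (v, p.2.2 ⬝ᵥ v, w)
  rw [h4, map_zero] at h5
  exact ⟨(congrArg Prod.fst h5).symm, (congrArg (fun q => q.2.2) h5).symm⟩

/-- At each point, `F` respects or swaps the vertical and horizontal directions. -/
theorem fderiv_respects_or_swaps (hn : 1 ≤ n) (hF : AnalyticOnNhd ℝ F Set.univ)
    (hmap : ∀ Φ ∈ GXset n, unpackTriple n (F ∘ packTriple n Φ) ∈ GXset n)
    (hinv : ∀ Φ ∈ GXset n, F ∘ F ∘ packTriple n Φ = packTriple n Φ) (p : JetSpace n) :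
    (∀ v, (fderiv ℝ F p (0, 0, v)).1 = 0 ∧ (fderiv ℝ F p (v, p.2.2 ⬝ᵥ v, 0)).2.2 = 0) ∨
    (∀ v, (fderiv ℝ F p (v, p.2.2 ⬝ᵥ v, 0)).1 = 0 ∧ (fderiv ℝ F p (0, 0, v)).2.2 = 0) := by
  have hs : ContDiff ℝ (⊤ : ℕ∞) F := hF.contDiff
  have hd : Differentiable ℝ F := hs.differentiable (by simp)
  have hc := isContact_of_GXset hs hmap
  have hF2 := involutive_of_GXset hinv
  have : Nonempty (Fin n) := ⟨⟨0, hn⟩⟩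
  let L : JetSpace n →ₗ[ℝ] JetSpace n := fderiv ℝ F p
  let H := L ∘ₗ horizontalLift p
  let V : (Fin n → ℝ) →ₗ[ℝ] JetSpace n :=
    L ∘ₗ LinearMap.inr ℝ (Fin n → ℝ) (ℝ × (Fin n → ℝ)) ∘ₗ LinearMap.inr ℝ ℝ (Fin n → ℝ)
  let π : JetSpace n →ₗ[ℝ] (Fin n → ℝ) := LinearMap.fst ℝ _ _
  let ρ : JetSpace n →ₗ[ℝ] (Fin n → ℝ) := LinearMap.snd ℝ _ _ ∘ₗ LinearMap.snd ℝ _ _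
  have hsum (v w : Fin n → ℝ) : H v + V w = fderiv ℝ F p (v, p.2.2 ⬝ᵥ v, w) := by
    have : ((v, p.2.2 ⬝ᵥ v, w) : JetSpace n) = (v, p.2.2 ⬝ᵥ v, 0) + (0, 0, w) := by simp
    rw [this, map_add]
    rfl
  have hfst := fun v w => fderiv_fst_eq_zero_or_snd_snd_eq_zero hF hmap hinv p (v := v) (w := w)
  have key := LinearMap.blockDiagonal_or_antidiagonal (π ∘ₗ H) (π ∘ₗ V) (ρ ∘ₗ H) (ρ ∘ₗ V)
    (fun v w h1 h2 => hc.eq_zero_of_fderiv hF2 hd p (v := v) (w := w)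
      (by rw [← hsum]; exact h1) (by rw [← hsum]; exact h2))
    (fun w => by
      have := hfst 0 w (.inl rfl)
      rwa [← hsum, map_zero, zero_add] at this)
    (fun v => hfst v 0 (.inr rfl))
  refine key.imp (fun h v => ?_) (fun h v => ?_)
  · exact ⟨congrArg (fun f => f v) h.1, congrArg (fun f => f v) h.2⟩
  · exact ⟨congrArg (fun f => f v) h.1, congrArg (fun f => f v) h.2⟩

/-- `F` respects the vertical and horizontal directions everywhere or swaps them everywhere. -/
theorem forall_fderiv_respects_or_swaps (hn : 1 ≤ n) (hF : AnalyticOnNhd ℝ F Set.univ)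
    (hmap : ∀ Φ ∈ GXset n, unpackTriple n (F ∘ packTriple n Φ) ∈ GXset n)
    (hinv : ∀ Φ ∈ GXset n, F ∘ F ∘ packTriple n Φ = packTriple n Φ) :
    (∀ (p : JetSpace n) v,
      (fderiv ℝ F p (0, 0, v)).1 = 0 ∧ (fderiv ℝ F p (v, p.2.2 ⬝ᵥ v, 0)).2.2 = 0) ∨
    (∀ (p : JetSpace n) v,
      (fderiv ℝ F p (v, p.2.2 ⬝ᵥ v, 0)).1 = 0 ∧ (fderiv ℝ F p (0, 0, v)).2.2 = 0) := by
  have hs : ContDiff ℝ (⊤ : ℕ∞) F := hF.contDiff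
  have hd : Differentiable ℝ F := hs.differentiable (by simp)
  have hc := isContact_of_GXset hs hmap
  have hF2 := involutive_of_GXset hinv
  have hcont : Continuous (fderiv ℝ F) := hs.continuous_fderiv (by simp)
  have hcV (v : Fin n → ℝ) : Continuous fun p => fderiv ℝ F p (0, 0, v) := by fun_prop
  have hcH (v : Fin n → ℝ) : Continuous fun p : JetSpace n =>
      fderiv ℝ F p (v, p.2.2 ⬝ᵥ v, 0) := by
    simp only [dotProduct]
    fun_prop
  let R : Set (JetSpace n) := {p | ∀ v,
    (fderiv ℝ F p (0, 0, v)).1 = 0 ∧ (fderiv ℝ F p (v, p.2.2 ⬝ᵥ v, 0)).2.2 = 0}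
  let W : Set (JetSpace n) := {p | ∀ v,
    (fderiv ℝ F p (v, p.2.2 ⬝ᵥ v, 0)).1 = 0 ∧ (fderiv ℝ F p (0, 0, v)).2.2 = 0}
  have hR : IsClosed R := by
    have : R = ⋂ v, {p | (fderiv ℝ F p (0, 0, v)).1 = 0} ∩
        {p : JetSpace n | (fderiv ℝ F p (v, p.2.2 ⬝ᵥ v, 0)).2.2 = 0} := by
      ext; simp [R]
    rw [this]
    exact isClosed_iInter fun v => (isClosed_eq (hcV v).fst continuous_const).inter
      (isClosed_eq (hcH v).snd.snd continuous_const)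
  have hW : IsClosed W := by
    have : W = ⋂ v, {p : JetSpace n | (fderiv ℝ F p (v, p.2.2 ⬝ᵥ v, 0)).1 = 0} ∩
        {p | (fderiv ℝ F p (0, 0, v)).2.2 = 0} := by
      ext; simp [W]
    rw [this]
    exact isClosed_iInter fun v => (isClosed_eq (hcH v).fst continuous_const).inter
      (isClosed_eq (hcV v).snd.snd continuous_const)
  have hcover (p : JetSpace n) : p ∈ R ∨ p ∈ W := fderiv_respects_or_swaps hn hF hmap hinv p
  have hdisj (p : JetSpace n) (h1 : p ∈ R) (h2 : p ∈ W) : False := by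
    have h3 := hc.eq_zero_of_fderiv hF2 hd p (v := 0) (w := fun _ => 1)
      (by simpa using (h1 _).1) (by simpa using (h2 _).2)
    exact one_ne_zero (congrFun h3.2 ⟨0, hn⟩)
  have hcompl : Rᶜ = W := by
    ext p
    exact ⟨fun h => (hcover p).resolve_left h, fun h h' => hdisj p h' h⟩
  have hclopen : IsClopen R := ⟨hR, isClosed_compl_iff.1 (hcompl ▸ hW)⟩
  rcases isClopen_iff.1 hclopen with h | h
  · refine .inr fun p => (hcover p).resolve_left (h ▸ Set.notMem_empty p)
  · exact .inl fun p => (h ▸ Set.mem_univ p : p ∈ R)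

/-- `F` exchanges the outer coordinates or preserves them. -/
theorem eq_or_swap_of_GXset (hn : 1 ≤ n) (hF : AnalyticOnNhd ℝ F Set.univ)
    (hmap : ∀ Φ ∈ GXset n, unpackTriple n (F ∘ packTriple n Φ) ∈ GXset n)
    (hinv : ∀ Φ ∈ GXset n, F ∘ F ∘ packTriple n Φ = packTriple n Φ)
    (hY : ∀ x : Fin n → ℝ, F (x, 1 / 2 * (x ⬝ᵥ x), x) = (x, 1 / 2 * (x ⬝ᵥ x), x)) :
    (∀ p, (F p).1 = p.1 ∧ (F p).2.2 = p.2.2) ∨ (∀ p, (F p).1 = p.2.2 ∧ (F p).2.2 = p.1) := by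
  have hs : ContDiff ℝ (⊤ : ℕ∞) F := hF.contDiff
  have hd : Differentiable ℝ F := hs.differentiable (by simp)
  have hc := isContact_of_GXset hs hmap
  have hF2 := involutive_of_GXset hinv
  have hfst (p d : JetSpace n) : fderiv ℝ (fun q => (F q).1) p d = (fderiv ℝ F p d).1 := by
    rw [(hd p).hasFDerivAt.fst.fderiv]; rfl
  have hsnd (p d : JetSpace n) : fderiv ℝ (fun q => (F q).2.2) p d = (fderiv ℝ F p d).2.2 := by
    rw [(hd p).hasFDerivAt.snd.snd.fderiv]; rfl
  rcases forall_fderiv_respects_or_swaps hn hF hmap hinv with h | h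
  · refine .inl fun p => ⟨?_, ?_⟩
    · refine eq_fst_of_contact (f := fun q => (F q).1) hd.fst (fun q w => ?_) (fun q v hv => ?_)
        (fun x => by rw [hY]) p
      · rw [hfst, (h q w).1]
      · rw [hfst] at hv
        exact (hc.eq_zero_of_fderiv hF2 hd q hv (h q v).2).1
    · refine eq_snd_snd_of_contact (f := fun q => (F q).2.2) hd.snd.snd (fun q w => ?_)
        (fun q v hv => ?_) (fun x => by rw [hY]) p
      · rw [hsnd, (h q w).2]
      · rw [hsnd] at hv
        exact (hc.eq_zero_of_fderiv hF2 hd q (v := 0) (by simpa using (h q v).1)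
          (by simpa using hv)).2
  · have h1 (p : JetSpace n) : (F p).1 = p.2.2 := by
      refine eq_snd_snd_of_contact (f := fun q => (F q).1) hd.fst (fun q w => ?_)
        (fun q v hv => ?_) (fun x => by rw [hY]) p
      · rw [hfst, (h q w).1]
      · rw [hfst] at hv
        exact (hc.eq_zero_of_fderiv hF2 hd q (v := 0) (by simpa using hv)
          (by simpa using (h q v).2)).2
    exact .inr fun p => ⟨h1 p, by rw [← h1, hF2 p]⟩

end Transform

/-- **Lemma 3.1**: if the transform `𝒯(Φ) = F ∘ Φ` induced by a real-analytic map
`F = (F₁, F₂, F₃) : ℝ^{2n+1} → ℝ^{2n+1}` maps `GX` into `GX`, is an involution on `GX`,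
fixes every element of `GY` and moves every element of `GX ∖ GY`, then for each
`i ∈ {1, …, n}` there are constants `pᵢ, pᵢ', qᵢ, qᵢ'` with
`F₁ᵢ(X, Y, Z) = pᵢXᵢ + pᵢ'Zᵢ` and `F₃ᵢ(X, Y, Z) = qᵢXᵢ + qᵢ'Zᵢ` on all of `ℝ^{2n+1}`. -/
theorem lemma_3_1 (n : ℕ) (hn : 1 ≤ n)
    (F : (Fin n → ℝ) × ℝ × (Fin n → ℝ) → (Fin n → ℝ) × ℝ × (Fin n → ℝ))
    (hF : AnalyticOnNhd ℝ F Set.univ)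
    (T : TripleMap n → TripleMap n)
    (hTF : ∀ Φ ∈ GXset n, T Φ = unpackTriple n (F ∘ packTriple n Φ))
    (hmap : ∀ Φ ∈ GXset n, T Φ ∈ GXset n)
    (hinv : ∀ Φ ∈ GXset n, T (T Φ) = Φ)
    (hfix : ∀ Φ ∈ GXset n, (Φ ∈ GYset n → T Φ = Φ) ∧ (Φ ∉ GYset n → T Φ ≠ Φ)) :
    ∀ i : Fin n, ∃ p p' q q' : ℝ, ∀ w : (Fin n → ℝ) × ℝ × (Fin n → ℝ),
      (F w).1 i = p * w.1 i + p' * w.2.2 i ∧ (F w).2.2 i = q * w.1 i + q' * w.2.2 i := by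
  have hTmap : ∀ Φ ∈ GXset n, unpackTriple n (F ∘ packTriple n Φ) ∈ GXset n := fun Φ hΦ =>
    hTF Φ hΦ ▸ hmap Φ hΦ
  have hTinv : ∀ Φ ∈ GXset n, F ∘ F ∘ packTriple n Φ = packTriple n Φ := by
    intro Φ hΦ
    have h := hinv Φ hΦ
    rw [hTF _ (hmap Φ hΦ), hTF Φ hΦ] at h
    exact congrArg (packTriple n) h
  have hY (x : Fin n → ℝ) : F (x, 1 / 2 * (x ⬝ᵥ x), x) = (x, 1 / 2 * (x ⬝ᵥ x), x) := by
    have hG := quadTriple_mem_GXset (0 : JetSpace n) (P := .id ℝ _) (Q := .id ℝ _)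
      (fun u v => dotProduct_comm _ _) Function.bijective_id Function.bijective_id
    have h := (hfix _ hG).1 ⟨_, hG.1.1, hG.2.2.1, by simp [quadTriple, dotProduct, sq]⟩
    rw [hTF _ hG] at h
    simpa [packTriple, unpackTriple, quadTriple] using congrFun (congrArg (packTriple n) h) x
  intro i
  rcases eq_or_swap_of_GXset hn hF hTmap hTinv hY with h | h
  · exact ⟨1, 0, 0, 1, fun w => by simp [h w]⟩
  · exact ⟨0, 1, 1, 0, fun w => by simp [h w]⟩
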